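/- arXiv:2405.02526 — 4 statements merged into one kernel-verified Lean document; each statement's English description precedes it below -/
import Mathlib

section
/- (Monotonicity and stability of the constrained marching formula, left-hand cell.) Let s ∈ ℝ, q ≥ 0 with s + q ≥ 0, set L := sup_{[0,1]}|f'| + |s|, and let Δx, Δt > 0 satisfy 2LΔt ≤ Δx (CFL). Let γ ≥ Δx and δ := γ + sΔt. Define, for (u,v,w) ∈ [0,1]³, H(u,v,w) := (vγ − (min{God^s(v,w), q} − EO(u,v))Δt)/δ. Then δ > 0, H is nondecreasing in each of its three arguments on [0,1]³, H(0,0,0) = 0 and H(1,1,1) = 1; consequently H maps [0,1]³ into [0,1]. -/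
/-!
Up to the positive factor `1 / (γ + s Δt)`, the left-hand marching formula is
`v γ - Δt min(God(v,w), q) + Δt EO(u,v)`. Monotonicity in `u` and `w` is that of the two numerical
fluxes: `EO` is nondecreasing in its first argument because a concave flux increases up to its
maximiser, and `God` is nonincreasing in its second one.

In `v` the term `v γ` competes with two fluxes of the wrong sign. `God` is Lipschitz in its first
argument with constant `sup |f'| + |s|` (`God_le_add`), and `EO` in its second one with constant
`sup |f'|`, so that the increment in `v` is at least `γ - (2 sup |f'| + |s|) Δt ≥ 0` per unit of
`v`, by the CFL condition. Evaluating at `(0,0,0)` and `(1,1,1)` is direct (`s + q ≥ 0` says that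
the constraint is not active at density one), and monotonicity then confines the values to `[0,1]`.
-/

open MeasureTheory Set Filter Topology

noncomputable section

/-- The normal flux `F_s(ρ) = f(ρ) - s·ρ` through the line of slope `s`. -/
def Flx (f : ℝ → ℝ) (s ρ : ℝ) : ℝ := f ρ - s * ρ

/-- The Kruzhkov entropy flux `Φ_s(a,b) = sgn(a-b)(F_s(a) - F_s(b))`. -/
def EFlx (f : ℝ → ℝ) (s a b : ℝ) : ℝ := Real.sign (a - b) * (Flx f s a - Flx f s b)

/-- `f` is a bell-shaped flux with critical density `ρb`:
`f` is `C²` on `[0,1]`, vanishes at `0` and `1`, is concave on `[0,1]`, and its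
derivative has the sign of `ρb - ρ` a.e. on `(0,1)`. -/
structure BellShaped (f : ℝ → ℝ) (ρb : ℝ) : Prop where
  smooth : ContDiffOn ℝ 2 f (Icc 0 1)
  zero_at_zero : f 0 = 0
  zero_at_one : f 1 = 0
  concave : ConcaveOn ℝ (Icc 0 1) f
  crit_mem : ρb ∈ Ioo (0:ℝ) 1
  deriv_sign : ∀ᵐ ρ ∂(volume.restrict (Ioo (0:ℝ) 1)),
    0 < derivWithin f (Icc 0 1) ρ * (ρb - ρ)

/-- `max_{[0,1]} F_s`. -/
def maxFlx (f : ℝ → ℝ) (s : ℝ) : ℝ := sSup (Flx f s '' Icc 0 1)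

/-- Admissible slope–constraint pair `(s,q)`. -/
def AdmissiblePair (f : ℝ → ℝ) (s q : ℝ) : Prop :=
  (0 ≤ s ∧ 0 ≤ q ∧ q < maxFlx f s) ∨ (s < 0 ∧ -s ≤ q ∧ q < maxFlx f s)

/-- The admissibility germ `G_s(q) = G¹ ∪ G² ∪ G³`. -/
def Germ (f : ℝ → ℝ) (s q : ℝ) : Set (ℝ × ℝ) :=
  {p | p.1 ∈ Icc (0:ℝ) 1 ∧ p.2 ∈ Icc (0:ℝ) 1 ∧
    ((p.2 < p.1 ∧ Flx f s p.1 = q ∧ Flx f s p.2 = q) ∨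
     (p.1 = p.2 ∧ Flx f s p.1 ≤ q) ∨
     (p.1 < p.2 ∧ Flx f s p.1 = Flx f s p.2 ∧ Flx f s p.1 ≤ q))}

/-- The constraint remainder `ℛ_s(κ,q) = 2(F_s(κ) - min{F_s(κ), q})`. -/
def Rem (f : ℝ → ℝ) (s κ q : ℝ) : ℝ := 2 * (Flx f s κ - min (Flx f s κ) q)

/-- The Engquist–Osher numerical flux of `f` (with `ρb` the maximiser of `f`):
`EO(a,b) = f(min(a,ρb)) + f(max(b,ρb)) - f(ρb)`. -/
def EO (f : ℝ → ℝ) (ρb a b : ℝ) : ℝ := f (min a ρb) + f (max b ρb) - f ρb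

/-- The Godunov numerical flux of `F_s`. -/
def God (f : ℝ → ℝ) (s a b : ℝ) : ℝ :=
  if a ≤ b then sInf (Flx f s '' Icc a b) else sSup (Flx f s '' Icc b a)

/-- `sup_{[0,1]} |f'|`. -/
def supDeriv (f : ℝ → ℝ) : ℝ :=
  sSup ((fun ρ => |derivWithin f (Icc (0:ℝ) 1) ρ|) '' Icc (0:ℝ) 1)

/-- Constrained marching formula for the cell on the right of the interface. -/
def Hright (f : ℝ → ℝ) (ρb s q Δx Δt α : ℝ) (u v w z : ℝ) : ℝ :=
  (v * α + w * Δx - (EO f ρb w z - min (God f s u v) q) * Δt) / (α + Δx - s * Δt)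

/-- Constrained marching formula for the cell on the left of the interface. -/
def Hleft (f : ℝ → ℝ) (ρb s q Δx Δt γ : ℝ) (u v w : ℝ) : ℝ :=
  (v * γ - (min (God f s v w) q - EO f ρb u v) * Δt) / (γ + s * Δt)

lemma God_of_le {f : ℝ → ℝ} {s a b : ℝ} (hc : ContinuousOn (Flx f s) (Icc 0 1))
    (ha : a ∈ Icc (0:ℝ) 1) (hb : b ∈ Icc (0:ℝ) 1) (hab : a ≤ b) :
    ∃ x ∈ Icc a b, God f s a b = Flx f s x ∧ ∀ y ∈ Icc a b, Flx f s x ≤ Flx f s y := by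
  obtain ⟨x, hx, hx'⟩ := isCompact_Icc.exists_sInf_image_eq_and_le (nonempty_Icc.2 hab)
    (hc.mono (Icc_subset_Icc ha.1 hb.2))
  exact ⟨x, hx, by rw [God, if_pos hab, hx'.1], hx'.2⟩

lemma God_of_ge {f : ℝ → ℝ} {s a b : ℝ} (hc : ContinuousOn (Flx f s) (Icc 0 1))
    (ha : a ∈ Icc (0:ℝ) 1) (hb : b ∈ Icc (0:ℝ) 1) (hab : b < a) :
    ∃ x ∈ Icc b a, God f s a b = Flx f s x ∧ ∀ y ∈ Icc b a, Flx f s y ≤ Flx f s x := by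
  obtain ⟨x, hx, hx'⟩ := isCompact_Icc.exists_sSup_image_eq_and_ge (nonempty_Icc.2 hab.le)
    (hc.mono (Icc_subset_Icc hb.1 ha.2))
  exact ⟨x, hx, by rw [God, if_neg hab.not_ge, hx'.1], hx'.2⟩

lemma God_anti_right {f : ℝ → ℝ} {s a b₁ b₂ : ℝ} (hc : ContinuousOn (Flx f s) (Icc 0 1))
    (ha : a ∈ Icc (0:ℝ) 1) (hb₁ : b₁ ∈ Icc (0:ℝ) 1) (hb₂ : b₂ ∈ Icc (0:ℝ) 1) (hb : b₁ ≤ b₂) :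
    God f s a b₂ ≤ God f s a b₁ := by
  rcases le_or_gt a b₂ with h₂ | h₂
  · obtain ⟨x, hx, ex, mx⟩ := God_of_le hc ha hb₂ h₂
    rcases le_or_gt a b₁ with h₁ | h₁
    · obtain ⟨y, hy, ey, -⟩ := God_of_le hc ha hb₁ h₁
      rw [ex, ey]
      exact mx y ⟨hy.1, hy.2.trans hb⟩
    · obtain ⟨y, hy, ey, my⟩ := God_of_ge hc ha hb₁ h₁
      rw [ex, ey]
      exact (mx a ⟨le_rfl, h₂⟩).trans (my a ⟨h₁.le, le_rfl⟩)
  · obtain ⟨x, hx, ex, -⟩ := God_of_ge hc ha hb₂ h₂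
    obtain ⟨y, hy, ey, my⟩ := God_of_ge hc ha hb₁ (hb.trans_lt h₂)
    rw [ex, ey]
    exact my x ⟨hb.trans hx.1, hx.2⟩

/-- One-sided Lipschitz bound for the Godunov flux in its first argument. -/
lemma God_le_add {f : ℝ → ℝ} {s K a₁ a₂ b : ℝ} (hc : ContinuousOn (Flx f s) (Icc 0 1))
    (hK : 0 ≤ K)
    (hL : ∀ x ∈ Icc (0:ℝ) 1, ∀ y ∈ Icc (0:ℝ) 1, Flx f s y ≤ Flx f s x + K * |y - x|)
    (ha₁ : a₁ ∈ Icc (0:ℝ) 1) (ha₂ : a₂ ∈ Icc (0:ℝ) 1) (hb : b ∈ Icc (0:ℝ) 1) (ha : a₁ ≤ a₂) :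
    God f s a₂ b ≤ God f s a₁ b + K * (a₂ - a₁) := by
  have key : ∀ x ∈ Icc (0:ℝ) 1, ∀ y ∈ Icc (0:ℝ) 1, x ≤ y → y - x ≤ a₂ - a₁ →
      Flx f s y ≤ Flx f s x + K * (a₂ - a₁) := fun x hx y hy hxy h => by
    have h1 := hL x hx y hy
    rw [abs_of_nonneg (sub_nonneg.2 hxy)] at h1
    have := mul_le_mul_of_nonneg_left h hK
    linarith
  rcases le_or_gt a₁ b with h₁ | h₁
  · obtain ⟨x, hx, ex, -⟩ := God_of_le hc ha₁ hb h₁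
    have hx' : x ∈ Icc (0:ℝ) 1 := ⟨ha₁.1.trans hx.1, hx.2.trans hb.2⟩
    rcases le_or_gt a₂ b with h₂ | h₂
    · obtain ⟨y, hy, ey, my⟩ := God_of_le hc ha₂ hb h₂
      rw [ex, ey]
      -- project the minimiser on `[a₁, b]` onto `[a₂, b]`
      refine (my (max x a₂) ⟨le_max_right _ _, max_le hx.2 h₂⟩).trans
        (key x hx' _ ⟨hx'.1.trans (le_max_left _ _), max_le hx'.2 ha₂.2⟩ (le_max_left _ _) ?_)
      rcases max_cases x a₂ with h | h <;> linarith [hx.1]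
    · obtain ⟨y, hy, ey, -⟩ := God_of_ge hc ha₂ hb h₂
      rw [ex, ey]
      exact key x hx' y ⟨hb.1.trans hy.1, hy.2.trans ha₂.2⟩ (hx.2.trans hy.1)
        (by linarith [hx.1, hy.2])
  · obtain ⟨x, hx, ex, mx⟩ := God_of_ge hc ha₁ hb h₁
    obtain ⟨y, hy, ey, -⟩ := God_of_ge hc ha₂ hb (h₁.trans_le ha)
    have hy' : y ∈ Icc (0:ℝ) 1 := ⟨hb.1.trans hy.1, hy.2.trans ha₂.2⟩
    rw [ex, ey]
    -- project the maximiser on `[b, a₂]` onto `[b, a₁]`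
    have h1 := mx (min y a₁) ⟨le_min hy.1 h₁.le, min_le_right _ _⟩
    have h2 := key (min y a₁) ⟨le_min hy'.1 ha₁.1, (min_le_left _ _).trans hy'.2⟩ y hy'
      (min_le_left _ _) (by rcases min_cases y a₁ with h | h <;> linarith [hy.2])
    linarith

lemma BellShaped.abs_sub_le {f : ℝ → ℝ} {ρb : ℝ} (hf : BellShaped f ρb) :
    0 ≤ supDeriv f ∧
      ∀ x ∈ Icc (0:ℝ) 1, ∀ y ∈ Icc (0:ℝ) 1, |f y - f x| ≤ supDeriv f * |y - x| := by
  have hcd : ContinuousOn (fun ρ => |derivWithin f (Icc (0:ℝ) 1) ρ|) (Icc 0 1) :=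
    (hf.smooth.continuousOn_derivWithin (uniqueDiffOn_Icc zero_lt_one) (by norm_num)).abs
  have hbd : ∀ x ∈ Icc (0:ℝ) 1, |derivWithin f (Icc (0:ℝ) 1) x| ≤ supDeriv f := fun x hx =>
    le_csSup (isCompact_Icc.bddAbove_image hcd) (mem_image_of_mem _ hx)
  refine ⟨(abs_nonneg _).trans (hbd 0 (by simp)), fun x hx y hy => ?_⟩
  exact (convex_Icc (0:ℝ) 1).norm_image_sub_le_of_norm_derivWithin_le
    (hf.smooth.differentiableOn (by norm_num)) hbd hx hy

/-- A concave function is nondecreasing to the left of its maximiser. -/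
lemma mono_left_of_max {f : ℝ → ℝ} {c x y : ℝ} (hf : ConcaveOn ℝ (Icc 0 1) f)
    (hc : c ∈ Icc (0:ℝ) 1) (hmax : IsMaxOn f (Icc (0:ℝ) 1) c) (hx : x ∈ Icc (0:ℝ) 1)
    (hxy : x ≤ y) (hyc : y ≤ c) : f x ≤ f y := by
  have h := hf.min_le_of_mem_Icc hx hc ⟨hxy, hyc⟩
  rwa [min_eq_left (hmax hx)] at h

/-- monotonicity and stability of the constrained marching formula,
left-hand cell. -/
theorem marching_left_monotone_stable
    (f : ℝ → ℝ) (ρb : ℝ) (hf : BellShaped f ρb)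
    (hmax : IsMaxOn f (Icc (0:ℝ) 1) ρb)
    (s q : ℝ) (hq : 0 ≤ q) (hsq : 0 ≤ s + q)
    (Δx Δt γ : ℝ) (hΔx : 0 < Δx) (hΔt : 0 < Δt)
    (hCFL : 2 * (supDeriv f + |s|) * Δt ≤ Δx) (hγ : Δx ≤ γ) :
    0 < γ + s * Δt ∧
    (∀ u₁ u₂ v w, u₁ ∈ Icc (0:ℝ) 1 → u₂ ∈ Icc (0:ℝ) 1 → v ∈ Icc (0:ℝ) 1 →
      w ∈ Icc (0:ℝ) 1 → u₁ ≤ u₂ →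
      Hleft f ρb s q Δx Δt γ u₁ v w ≤ Hleft f ρb s q Δx Δt γ u₂ v w) ∧
    (∀ u v₁ v₂ w, u ∈ Icc (0:ℝ) 1 → v₁ ∈ Icc (0:ℝ) 1 → v₂ ∈ Icc (0:ℝ) 1 →
      w ∈ Icc (0:ℝ) 1 → v₁ ≤ v₂ →
      Hleft f ρb s q Δx Δt γ u v₁ w ≤ Hleft f ρb s q Δx Δt γ u v₂ w) ∧
    (∀ u v w₁ w₂, u ∈ Icc (0:ℝ) 1 → v ∈ Icc (0:ℝ) 1 → w₁ ∈ Icc (0:ℝ) 1 →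
      w₂ ∈ Icc (0:ℝ) 1 → w₁ ≤ w₂ →
      Hleft f ρb s q Δx Δt γ u v w₁ ≤ Hleft f ρb s q Δx Δt γ u v w₂) ∧
    Hleft f ρb s q Δx Δt γ 0 0 0 = 0 ∧
    Hleft f ρb s q Δx Δt γ 1 1 1 = 1 ∧
    (∀ u v w, u ∈ Icc (0:ℝ) 1 → v ∈ Icc (0:ℝ) 1 → w ∈ Icc (0:ℝ) 1 →
      Hleft f ρb s q Δx Δt γ u v w ∈ Icc (0:ℝ) 1) := by
  obtain ⟨hM, hLf⟩ := hf.abs_sub_le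
  have hρ : ρb ∈ Icc (0:ℝ) 1 := Ioo_subset_Icc_self hf.crit_mem
  have hc : ContinuousOn (Flx f s) (Icc 0 1) := by
    unfold Flx
    exact hf.smooth.continuousOn.sub (by fun_prop)
  have hL : ∀ x ∈ Icc (0:ℝ) 1, ∀ y ∈ Icc (0:ℝ) 1,
      Flx f s y ≤ Flx f s x + (supDeriv f + |s|) * |y - x| := fun x hx y hy => by
    have h1 := (le_abs_self _).trans (hLf x hx y hy)
    have h2 := neg_abs_le (s * (y - x))
    rw [abs_mul] at h2
    unfold Flx
    linarith
  have hMt : 0 ≤ supDeriv f * Δt := mul_nonneg hM hΔt.le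
  have hst : 0 ≤ |s| * Δt := mul_nonneg (abs_nonneg s) hΔt.le
  have hδ : 0 < γ + s * Δt := by
    have := mul_le_mul_of_nonneg_right (neg_abs_le s) hΔt.le
    linarith
  have hu : ∀ u₁ u₂ v w, u₁ ∈ Icc (0:ℝ) 1 → u₂ ∈ Icc (0:ℝ) 1 → v ∈ Icc (0:ℝ) 1 →
      w ∈ Icc (0:ℝ) 1 → u₁ ≤ u₂ →
      Hleft f ρb s q Δx Δt γ u₁ v w ≤ Hleft f ρb s q Δx Δt γ u₂ v w := by
    intro u₁ u₂ v w h₁ h₂ hv hw h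
    have hEO : EO f ρb u₁ v ≤ EO f ρb u₂ v := by
      have := mono_left_of_max hf.concave hρ hmax (x := min u₁ ρb) (y := min u₂ ρb)
        ⟨le_min h₁.1 hρ.1, (min_le_left _ _).trans h₁.2⟩ (min_le_min_right _ h) (min_le_right _ _)
      unfold EO
      linarith
    unfold Hleft
    gcongr
  have hv : ∀ u v₁ v₂ w, u ∈ Icc (0:ℝ) 1 → v₁ ∈ Icc (0:ℝ) 1 → v₂ ∈ Icc (0:ℝ) 1 →
      w ∈ Icc (0:ℝ) 1 → v₁ ≤ v₂ →
      Hleft f ρb s q Δx Δt γ u v₁ w ≤ Hleft f ρb s q Δx Δt γ u v₂ w := by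
    intro u v₁ v₂ w hu h₁ h₂ hw h
    have hd : 0 ≤ v₂ - v₁ := sub_nonneg.2 h
    have hG := God_le_add hc (add_nonneg hM (abs_nonneg s)) hL h₁ h₂ hw h
    have hG' : min (God f s v₂ w) q ≤ min (God f s v₁ w) q + (supDeriv f + |s|) * (v₂ - v₁) := by
      have h0 := mul_nonneg (add_nonneg hM (abs_nonneg s)) hd
      rw [← min_add_add_right]
      exact min_le_min hG (by linarith)
    have hEO : EO f ρb u v₁ - supDeriv f * (v₂ - v₁) ≤ EO f ρb u v₂ := by
      have h1 := hLf (max v₁ ρb) ⟨h₁.1.trans (le_max_left _ _), max_le h₁.2 hρ.2⟩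
        (max v₂ ρb) ⟨h₂.1.trans (le_max_left _ _), max_le h₂.2 hρ.2⟩
      have h2 : |max v₂ ρb - max v₁ ρb| ≤ v₂ - v₁ :=
        (abs_max_sub_max_le_abs v₂ v₁ ρb).trans (abs_of_nonneg hd).le
      have h3 := mul_le_mul_of_nonneg_left h2 hM
      have h4 := neg_abs_le (f (max v₂ ρb) - f (max v₁ ρb))
      unfold EO
      linarith
    have hA := mul_le_mul_of_nonneg_right hG' hΔt.le
    have hB := mul_le_mul_of_nonneg_right hEO hΔt.le
    have hC : 0 ≤ (γ - (2 * supDeriv f + |s|) * Δt) * (v₂ - v₁) :=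
      mul_nonneg (by linarith) hd
    unfold Hleft
    refine div_le_div_of_nonneg_right ?_ hδ.le
    linarith
  have hw : ∀ u v w₁ w₂, u ∈ Icc (0:ℝ) 1 → v ∈ Icc (0:ℝ) 1 → w₁ ∈ Icc (0:ℝ) 1 →
      w₂ ∈ Icc (0:ℝ) 1 → w₁ ≤ w₂ →
      Hleft f ρb s q Δx Δt γ u v w₁ ≤ Hleft f ρb s q Δx Δt γ u v w₂ := by
    intro u v w₁ w₂ hu hv h₁ h₂ h
    have hG := God_anti_right hc hv h₁ h₂ h
    unfold Hleft
    gcongr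
  have h0 : (0:ℝ) ∈ Icc (0:ℝ) 1 := by simp
  have h1 : (1:ℝ) ∈ Icc (0:ℝ) 1 := by simp
  have e0 : Hleft f ρb s q Δx Δt γ 0 0 0 = 0 := by
    simp [Hleft, God, EO, Flx, hf.zero_at_zero, hρ.1, hq]
  have e1 : Hleft f ρb s q Δx Δt γ 1 1 1 = 1 := by
    have hsq' : -s ≤ q := by linarith
    simp [Hleft, God, EO, Flx, hf.zero_at_one, hρ.2, hsq', hδ.ne']
  refine ⟨hδ, hu, hv, hw, e0, e1, fun u v w mu mv mw => ⟨?_, ?_⟩⟩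
  · rw [← e0]
    exact (hu 0 u 0 0 h0 mu h0 h0 mu.1).trans ((hv u 0 v 0 mu h0 mv h0 mv.1).trans
      (hw u v 0 w mu mv h0 mw mw.1))
  · rw [← e1]
    exact (hu u 1 v w mu h1 mv mw mu.2).trans ((hv 1 v 1 w h1 mv h1 mw mv.2).trans
      (hw 1 1 w 1 h1 h1 mw h1 mw.2))
end
end

section
/- (One-step one-sided Lipschitz bound for the Engquist–Osher scheme.) Let f : ℝ → ℝ be C² on [0,1] with f(0) = f(1) = 0, f''(ρ) ≤ −μ < 0 on [0,1], and maximizer ρ̄ ∈ (0,1). Let λ > 0 satisfy 2·(sup_{[0,1]}|f'|)·λ ≤ 1, and set a := λμ/4 and ψ(x) := x − a·x². Let u₀, u₁, u₂, u₃ ∈ [0,1] and define u₁' := u₁ − λ(EO(u₁,u₂) − EO(u₀,u₁)) and u₂' := u₂ − λ(EO(u₂,u₃) − EO(u₁,u₂)). Then max{u₁' − u₂', 0} ≤ ψ( max{ max{u₀ − u₁, 0}, max{u₁ − u₂, 0}, max{u₂ − u₃, 0} } ). -/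
/-!
Write `EO(a,b) = g(a) + h(b) - f(ρb)` with `g = f(min(·,ρb))` nondecreasing and `h = f(max(·,ρb))`
nonincreasing. Then
`u₁' - u₂' = (u₁ - u₂) - λ (2 g(u₁) - g(u₀) - g(u₂) + 2 h(u₂) - h(u₁) - h(u₃))`.
Let `M` be the maximum of the old one-sided differences. By the CFL condition the right-hand side is
nondecreasing in `u₀`, `u₁` and nonincreasing in `u₂`, `u₃`, so it may be evaluated in the extremal
configuration `u₀ = v + 2M`, `u₁ = v + M`, `u₂ = v`, `u₃ = v - M` with `v, v + M ∈ [0,1]`. The outer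
two points may leave `[0,1]`, but only where `g`, respectively `h`, is constant. There the bracket is
a sum of second differences of the concave functions `g` and `h`, and it is at least `μ M² / 4`
(`second_diff_bound`): the worst case is `ρb` halfway between `v` and `v + M`, where `g` and `h`
each contribute `μ M² / 8`.

Monotonicity, Lipschitz continuity and strong concavity of `f` are all read off from the inequality
`f x ≤ f y + f'(y) (x - y) - μ/2 (x - y)²` (`tangent_bound`).
-/

open Set

noncomputable section

/-- Strong concavity in tangent form, from `f'' ≤ -μ` and two applications of the mean value
theorem. -/
lemma tangent_bound (f : ℝ → ℝ) (μ : ℝ)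
    (hf : ContDiffOn ℝ 2 f (Icc 0 1))
    (hconc : ∀ ρ ∈ Icc (0:ℝ) 1,
      derivWithin (derivWithin f (Icc (0:ℝ) 1)) (Icc (0:ℝ) 1) ρ ≤ -μ) :
    ∀ x ∈ Icc (0:ℝ) 1, ∀ y ∈ Icc (0:ℝ) 1,
      f x ≤ f y + derivWithin f (Icc (0:ℝ) 1) y * (x - y) - μ / 2 * (x - y) ^ 2 := by
  set d := derivWithin f (Icc (0:ℝ) 1) with hd
  have hdC : ContDiffOn ℝ 1 d (Icc 0 1) :=
    hf.derivWithin (uniqueDiffOn_Icc zero_lt_one) (by norm_num)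
  have hder : ∀ (k : ℝ → ℝ), DifferentiableOn ℝ k (Icc 0 1) → ∀ c ∈ Ioo (0:ℝ) 1,
      HasDerivAt k (derivWithin k (Icc 0 1) c) c := fun k hk c hc =>
    ((hk c (Ioo_subset_Icc_self hc)).hasDerivWithinAt).hasDerivAt (Icc_mem_nhds hc.1 hc.2)
  have hf' := hder f (hf.differentiableOn (by norm_num))
  have hd' := hder d (hdC.differentiableOn (by norm_num))
  have hdecr : ∀ x ∈ Icc (0:ℝ) 1, ∀ y ∈ Icc (0:ℝ) 1, x < y → d y - d x ≤ -μ * (y - x) := by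
    intro x hx y hy hxy
    obtain ⟨c, hc, he⟩ := exists_hasDerivAt_eq_slope d (derivWithin d (Icc 0 1)) hxy
      (hdC.continuousOn.mono (Icc_subset_Icc hx.1 hy.2))
      (fun c hc => hd' c ⟨hx.1.trans_lt hc.1, hc.2.trans_le hy.2⟩)
    have h1 := hconc c ⟨hx.1.trans hc.1.le, hc.2.le.trans hy.2⟩
    rw [he, div_le_iff₀ (by linarith)] at h1
    exact h1
  intro x hx y hy
  -- `f` minus the claimed upper bound, up to a constant: it is maximal at `y`
  let G : ℝ → ℝ := fun t => f t - d y * (t - y) + μ / 2 * (t - y) ^ 2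
  have hG : ∀ c ∈ Ioo (0:ℝ) 1, HasDerivAt G (d c - d y + μ * (c - y)) c := by
    intro c hc
    have h1 : HasDerivAt (fun t : ℝ => t - y) 1 c := (hasDerivAt_id c).sub_const y
    have h2 := ((hf' c hc).sub (h1.const_mul (d y))).add ((h1.pow 2).const_mul (μ / 2))
    refine h2.congr_deriv ?_
    simp only [← hd]
    norm_num
    ring
  have hGc : ContinuousOn G (Icc 0 1) := by
    have := hf.continuousOn
    fun_prop
  have key : G x ≤ G y := by
    rcases lt_trichotomy x y with h | h | h
    · obtain ⟨c, hc, he⟩ := exists_hasDerivAt_eq_slope G _ h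
        (hGc.mono (Icc_subset_Icc hx.1 hy.2))
        (fun c hc => hG c ⟨hx.1.trans_lt hc.1, hc.2.trans_le hy.2⟩)
      have h1 := hdecr c ⟨hx.1.trans hc.1.le, hc.2.le.trans hy.2⟩ y hy hc.2
      have h2 : 0 ≤ (G y - G x) / (y - x) := by rw [← he]; linarith
      have h3 := (le_div_iff₀ (by linarith)).1 h2
      linarith
    · rw [h]
    · obtain ⟨c, hc, he⟩ := exists_hasDerivAt_eq_slope G _ h
        (hGc.mono (Icc_subset_Icc hy.1 hx.2))
        (fun c hc => hG c ⟨hy.1.trans_lt hc.1, hc.2.trans_le hx.2⟩)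
      have h1 := hdecr y hy c ⟨hy.1.trans hc.1.le, hc.2.le.trans hx.2⟩ hc.1
      have h2 : (G x - G y) / (x - y) ≤ 0 := by rw [← he]; linarith
      have h3 := (div_le_iff₀ (by linarith)).1 h2
      linarith
  simp only [G, sub_self] at key
  linarith

/-- Lower bound for the sum of the second differences of `f(min(·,ρb))` at `v + M` and of
`f(max(·,ρb))` at `v`, where `d` stands for the derivative of `f`. The constant
`1/4` comes from `s² + t² ≥ (s + t)² / 2` with `s = ρb - v`, `t = v + M - ρb`. -/
lemma second_diff_bound (f d : ℝ → ℝ) (μ ρb : ℝ) (hμ : 0 < μ)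
    (ht : ∀ x ∈ Icc (0:ℝ) 1, ∀ y ∈ Icc (0:ℝ) 1,
      f x ≤ f y + d y * (x - y) - μ / 2 * (x - y) ^ 2)
    (hρb : ρb ∈ Icc (0:ℝ) 1) (hb : d ρb = 0)
    (hpos : ∀ x ∈ Icc (0:ℝ) 1, x < ρb → 0 ≤ d x)
    (hneg : ∀ x ∈ Icc (0:ℝ) 1, ρb < x → d x ≤ 0)
    (v M : ℝ) (hM : 0 ≤ M) (hv : 0 ≤ v) (hvM : v + M ≤ 1) :
    μ / 4 * M ^ 2 ≤
      2 * f (min (v + M) ρb) - f (min (v + M + M) ρb) - f (min v ρb)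
        + (2 * f (max v ρb) - f (max (v + M) ρb) - f (max (v - M) ρb)) := by
  have hvI : v ∈ Icc (0:ℝ) 1 := ⟨hv, by linarith⟩
  have hyI : v + M ∈ Icc (0:ℝ) 1 := ⟨by linarith, hvM⟩
  have hμM : 0 ≤ μ * M ^ 2 := by positivity
  rcases lt_or_ge (v + M) ρb with h1 | h1
  · -- only `g` contributes; the right-hand point of its stencil is cut off at `ρb`
    rw [max_eq_right h1.le, max_eq_right (by linarith : v ≤ ρb),
      max_eq_right (by linarith : v - M ≤ ρb), min_eq_left h1.le,
      min_eq_left (by linarith : v ≤ ρb)]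
    set e := min (v + M + M) ρb with he
    have he1 : v + M ≤ e := le_min (by linarith) h1.le
    have he2 : e ≤ v + M + M := min_le_left _ _
    have heI : e ∈ Icc (0:ℝ) 1 := ⟨by linarith [hyI.1], (min_le_right _ _).trans hρb.2⟩
    have a1 := ht e heI _ hyI
    have a2 := ht v hvI _ hyI
    have a3 : d (v + M) * (e - (v + M) - M) ≤ 0 :=
      mul_nonpos_of_nonneg_of_nonpos (hpos _ hyI h1) (by linarith)
    have a4 : 0 ≤ μ * (e - (v + M)) ^ 2 := by positivity
    nlinarith
  · rcases lt_or_ge ρb v with h2 | h2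
    · -- only `h` contributes; the left-hand point of its stencil is cut off at `ρb`
      rw [min_eq_right h1, min_eq_right (by linarith : ρb ≤ v + M + M),
        min_eq_right h2.le, max_eq_left h1, max_eq_left h2.le]
      set e := max (v - M) ρb with he
      have he1 : e ≤ v := max_le (by linarith) h2.le
      have he2 : v - M ≤ e := le_max_left _ _
      have heI : e ∈ Icc (0:ℝ) 1 := ⟨hρb.1.trans (le_max_right _ _), by linarith [hvI.2]⟩
      have a1 := ht e heI _ hvI
      have a2 := ht _ hyI _ hvI
      have a3 : d v * (e - v + M) ≤ 0 :=
        mul_nonpos_of_nonpos_of_nonneg (hneg _ hvI h2) (by linarith)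
      have a4 : 0 ≤ μ * (e - v) ^ 2 := by positivity
      nlinarith
    · rw [min_eq_right h1, min_eq_right (by linarith : ρb ≤ v + M + M),
        min_eq_left h2, max_eq_left h1, max_eq_right h2, max_eq_right (by linarith : v - M ≤ ρb)]
      have a1 := ht v hvI _ hρb
      have a2 := ht _ hyI _ hρb
      rw [hb] at a1 a2
      have a3 : 0 ≤ μ * ((ρb - v) - (v + M - ρb)) ^ 2 := by positivity
      nlinarith

/-- one-step one-sided Lipschitz bound for the Engquist–Osher
scheme: with `a = λμ/4` and `ψ(x) = x - a x²`, the positive part of the new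
backward difference is controlled by `ψ` of the maximum of the three old ones. -/
theorem eo_one_step_osl_bound
    (f : ℝ → ℝ) (μ : ℝ) (hμ : 0 < μ)
    (hf : ContDiffOn ℝ 2 f (Icc 0 1)) (hf0 : f 0 = 0) (hf1 : f 1 = 0)
    (hconc : ∀ ρ ∈ Icc (0:ℝ) 1,
      derivWithin (derivWithin f (Icc (0:ℝ) 1)) (Icc (0:ℝ) 1) ρ ≤ -μ)
    (ρb : ℝ) (hρb : ρb ∈ Ioo (0:ℝ) 1) (hmax : IsMaxOn f (Icc (0:ℝ) 1) ρb)
    (hρb_unique : ∀ x ∈ Icc (0:ℝ) 1, IsMaxOn f (Icc (0:ℝ) 1) x → x = ρb)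
    (lam : ℝ) (hlam : 0 < lam) (hCFL : 2 * supDeriv f * lam ≤ 1)
    (u₀ u₁ u₂ u₃ : ℝ) (h₀ : u₀ ∈ Icc (0:ℝ) 1) (h₁ : u₁ ∈ Icc (0:ℝ) 1)
    (h₂ : u₂ ∈ Icc (0:ℝ) 1) (h₃ : u₃ ∈ Icc (0:ℝ) 1) :
    max ((u₁ - lam * (EO f ρb u₁ u₂ - EO f ρb u₀ u₁))
          - (u₂ - lam * (EO f ρb u₂ u₃ - EO f ρb u₁ u₂))) 0 ≤
      max (max (max (u₀ - u₁) 0) (max (u₁ - u₂) 0)) (max (u₂ - u₃) 0)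
        - lam * μ / 4 *
          (max (max (max (u₀ - u₁) 0) (max (u₁ - u₂) 0)) (max (u₂ - u₃) 0)) ^ 2 := by
  set d := derivWithin f (Icc (0:ℝ) 1) with hd
  have hρI : ρb ∈ Icc (0:ℝ) 1 := Ioo_subset_Icc_self hρb
  have ht := tangent_bound f μ hf hconc
  rw [← hd] at ht
  have hdb : ∀ x ∈ Icc (0:ℝ) 1, |d x| ≤ supDeriv f := by
    intro x hx
    have hc : ContinuousOn (fun ρ => |d ρ|) (Icc (0:ℝ) 1) :=
      (hf.continuousOn_derivWithin (uniqueDiffOn_Icc zero_lt_one) (by norm_num)).abs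
    exact le_csSup (isCompact_Icc.image_of_continuousOn hc).bddAbove (mem_image_of_mem _ hx)
  set L := supDeriv f with hL
  have hb : d ρb = 0 := by
    rw [hd, derivWithin_of_mem_nhds (Icc_mem_nhds hρb.1 hρb.2)]
    exact (hmax.isLocalMax (Icc_mem_nhds hρb.1 hρb.2)).deriv_eq_zero
  have hpos : ∀ x ∈ Icc (0:ℝ) 1, x < ρb → 0 ≤ d x := by
    intro x hx hlt
    have a1 := ht _ hρI _ hx
    have a2 : f x ≤ f ρb := hmax hx
    have a3 : 0 ≤ μ / 2 * (ρb - x) ^ 2 := by positivity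
    have a4 : 0 ≤ d x * (ρb - x) := by linarith
    exact nonneg_of_mul_nonneg_left a4 (by linarith)
  have hneg : ∀ x ∈ Icc (0:ℝ) 1, ρb < x → d x ≤ 0 := by
    intro x hx hlt
    have a1 := ht _ hρI _ hx
    have a2 : f x ≤ f ρb := hmax hx
    have a3 : 0 ≤ μ / 2 * (ρb - x) ^ 2 := by positivity
    by_contra! h
    nlinarith [mul_pos h (sub_pos.2 hlt)]
  have hLip : ∀ x ∈ Icc (0:ℝ) 1, ∀ y ∈ Icc (0:ℝ) 1, f x - f y ≤ L * |x - y| := by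
    intro x hx y hy
    have a1 := ht x hx y hy
    have a3 : 0 ≤ μ / 2 * (x - y) ^ 2 := by positivity
    have a4 : d y * (x - y) ≤ L * |x - y| :=
      (le_abs_self _).trans (by
        rw [abs_mul]; exact mul_le_mul_of_nonneg_right (hdb y hy) (abs_nonneg _))
    linarith
  have hL0 : 0 ≤ L := (abs_nonneg _).trans (hdb _ hρI)
  -- since `f 0 = f 1`, the derivative at `0` is at least `μ / 2`
  have hlμ : lam * μ ≤ 1 := by
    have a1 := ht 1 (by norm_num) 0 (by norm_num)
    have a2 := (le_abs_self _).trans (hdb 0 (by norm_num))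
    rw [hf0, hf1] at a1
    have a3 : μ ≤ 2 * L := by linarith
    nlinarith [mul_le_mul_of_nonneg_left a3 hlam.le]
  have hclampmin : ∀ x ∈ Icc (0:ℝ) 1, min x ρb ∈ Icc (0:ℝ) 1 := fun x hx =>
    ⟨le_min hx.1 hρI.1, (min_le_left _ _).trans hx.2⟩
  have hclampmax : ∀ x ∈ Icc (0:ℝ) 1, max x ρb ∈ Icc (0:ℝ) 1 := fun x hx =>
    ⟨hx.1.trans (le_max_left _ _), max_le hx.2 hρI.2⟩
  have hgmono : ∀ x y, 0 ≤ x → x ≤ y → f (min x ρb) ≤ f (min y ρb) := by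
    intro x y hx hxy
    have hle : min x ρb ≤ min y ρb := min_le_min_right _ hxy
    have hyI : min y ρb ∈ Icc (0:ℝ) 1 :=
      ⟨le_min (hx.trans hxy) hρI.1, (min_le_right _ _).trans hρI.2⟩
    have hxI : min x ρb ∈ Icc (0:ℝ) 1 :=
      ⟨le_min hx hρI.1, (min_le_right _ _).trans hρI.2⟩
    rcases lt_or_ge y ρb with h | h
    · have a1 := ht _ hxI _ hyI
      have a2 := hpos _ hyI (by rw [min_eq_left h.le]; exact h)
      have a3 : 0 ≤ μ / 2 * (min x ρb - min y ρb) ^ 2 := by positivity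
      have a4 := mul_nonneg a2 (sub_nonneg.2 hle)
      linarith
    · rw [min_eq_right h]; exact hmax hxI
  have hhanti : ∀ x y, y ≤ 1 → x ≤ y → f (max y ρb) ≤ f (max x ρb) := by
    intro x y hy hxy
    have hle : max x ρb ≤ max y ρb := max_le_max_right _ hxy
    have hyI : max y ρb ∈ Icc (0:ℝ) 1 :=
      ⟨hρI.1.trans (le_max_right _ _), max_le hy hρI.2⟩
    have hxI : max x ρb ∈ Icc (0:ℝ) 1 :=
      ⟨hρI.1.trans (le_max_right _ _), max_le (hxy.trans hy) hρI.2⟩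
    rcases lt_or_ge ρb x with h | h
    · have a1 := ht _ hyI _ hxI
      have a2 := hneg _ hxI (by rw [max_eq_left h.le]; exact h)
      have a3 : 0 ≤ μ / 2 * (max y ρb - max x ρb) ^ 2 := by positivity
      have a4 := mul_nonneg (neg_nonneg.2 a2) (sub_nonneg.2 hle)
      linarith
    · rw [max_eq_right h]; exact hmax hyI
  have hgLip : ∀ x ∈ Icc (0:ℝ) 1, ∀ y ∈ Icc (0:ℝ) 1, x ≤ y →
      2 * lam * (f (min y ρb) - f (min x ρb)) ≤ min y ρb - min x ρb := by
    intro x hx y hy hxy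
    have hle : 0 ≤ min y ρb - min x ρb := sub_nonneg.2 (min_le_min_right _ hxy)
    have a1 := hLip _ (hclampmin y hy) _ (hclampmin x hx)
    rw [abs_of_nonneg hle] at a1
    have a2 := mul_le_mul_of_nonneg_left a1 (by positivity : 0 ≤ 2 * lam)
    have a3 := mul_le_mul_of_nonneg_right hCFL hle
    linarith
  have hhLip : ∀ x ∈ Icc (0:ℝ) 1, ∀ y ∈ Icc (0:ℝ) 1, x ≤ y →
      2 * lam * (f (max x ρb) - f (max y ρb)) ≤ max y ρb - max x ρb := by
    intro x hx y hy hxy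
    have hle : 0 ≤ max y ρb - max x ρb := sub_nonneg.2 (max_le_max_right _ hxy)
    have a1 := hLip _ (hclampmax x hx) _ (hclampmax y hy)
    rw [abs_sub_comm, abs_of_nonneg hle] at a1
    have a2 := mul_le_mul_of_nonneg_left a1 (by positivity : 0 ≤ 2 * lam)
    have a3 := mul_le_mul_of_nonneg_right hCFL hle
    linarith
  set M := max (max (max (u₀ - u₁) 0) (max (u₁ - u₂) 0)) (max (u₂ - u₃) 0) with hM
  have hM0 : 0 ≤ M := (le_max_right (u₂ - u₃) 0).trans (le_max_right _ _)
  have hMu0 : u₀ - u₁ ≤ M :=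
    (le_max_left _ _).trans ((le_max_left _ _).trans (le_max_left _ _))
  have hMu1 : u₁ - u₂ ≤ M :=
    (le_max_left _ _).trans ((le_max_right _ _).trans (le_max_left _ _))
  have hMu2 : u₂ - u₃ ≤ M := (le_max_left _ _).trans (le_max_right _ _)
  have hM1 : M ≤ 1 := by
    refine max_le (max_le (max_le ?_ ?_) (max_le ?_ ?_)) (max_le ?_ ?_) <;>
      linarith [h₀.1, h₀.2, h₁.1, h₁.2, h₂.1, h₂.2, h₃.1, h₃.2]
  have hψ : 0 ≤ M - lam * μ / 4 * M ^ 2 := by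
    have a1 := mul_le_mul_of_nonneg_right hlμ (mul_nonneg hM0 hM0)
    have a2 := mul_le_mul_of_nonneg_left hM1 hM0
    linarith
  refine max_le ?_ hψ
  -- `u₁` is raised until it reaches `u₂ + M` or `1`; then `u₂` is lowered to `u₁ - M`
  obtain ⟨v, hv0, hvu, huv, hv1⟩ : ∃ v, 0 ≤ v ∧ v ≤ u₂ ∧ u₁ ≤ v + M ∧ v + M ≤ 1 := by
    refine ⟨min u₂ (1 - M), le_min h₂.1 (by linarith), min_le_left _ _, ?_, ?_⟩
    · rcases min_choice u₂ (1 - M) with h | h <;> rw [h] <;> linarith [h₁.2]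
    · linarith [min_le_right u₂ (1 - M)]
  have hvI : v ∈ Icc (0:ℝ) 1 := ⟨hv0, by linarith⟩
  have hyI : v + M ∈ Icc (0:ℝ) 1 := ⟨by linarith, hv1⟩
  have hS := second_diff_bound f d μ ρb hμ ht hρI hb hpos hneg v M hM0 hv0 hv1
  -- monotonicity of the new difference in each of `u₀`, `u₃`, `u₁`, `u₂`; the CFL factor `2` in
  -- `hgLip`, `hhLip` suffices because `min x ρb + max x ρb = x + ρb`
  have b1 := hgmono u₀ (v + M + M) h₀.1 (by linarith)
  have b2 := hhanti (v - M) u₃ h₃.2 (by linarith)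
  have b3 := hgLip u₁ h₁ _ hyI huv
  have b4 := hhLip u₁ h₁ _ hyI huv
  have b5 := hgLip v hvI u₂ h₂ hvu
  have b6 := hhLip v hvI u₂ h₂ hvu
  have b7 := hhanti u₁ (v + M) hv1 huv
  have b8 := hgmono v u₂ hv0 hvu
  have m1 := min_add_max u₁ ρb
  have m2 := min_add_max u₂ ρb
  have m3 := min_add_max v ρb
  have m4 := min_add_max (v + M) ρb
  have c1 := mul_le_mul_of_nonneg_left b1 hlam.le
  have c2 := mul_le_mul_of_nonneg_left b2 hlam.le
  have c7 := mul_le_mul_of_nonneg_left b7 hlam.le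
  have c8 := mul_le_mul_of_nonneg_left b8 hlam.le
  have cS := mul_le_mul_of_nonneg_left hS hlam.le
  simp only [EO]
  linarith
end
end

section
/- (Decay of the one-sided Lipschitz quantity away from the interface.) Let a > 0 and ψ(x) := x − a·x². Let (j_n)_{n∈ℕ} be a sequence of integers with j_{n+1} ∈ {j_n, j_n + 1} for every n. Let D : ℕ × ℤ → ℝ satisfy D(n,j) ≥ 0 for all n ∈ ℕ, j ∈ ℤ, and D(n+1, j) ≤ ψ( max{ D(n, j−1), D(n, j), D(n, j+1) } ) for every n ∈ ℕ and every j ∈ ℤ with j ≥ j_{n+1} + 2. Then for every integer k ≥ 1, every n ∈ ℕ and every j ∈ ℤ with min{n+1, j − (j_{n+1} + 1)} ≥ k, one has D(n+1, j) ≤ 1/(k·a). -/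
/-!
In the scaled variable `y = a D`, the map `ψ` becomes `y ↦ y - y²`, and for `y ≥ 0`
one has `y - y² ≤ y / (1 + y)`, so it sends `{k y ≤ 1}` into `{(k + 1) y ≤ 1}`
(`scaled_step`). Since the interface index is nondecreasing, the three cells `j - 1, j, j + 1`
feeding a cell at distance at least `k + 1` from the interface were at distance
at least `k` one time step earlier. Induction on `k` therefore gives `k a D ≤ 1`
(`scaled_decay`); in this form it starts with the trivial case `k = 0`.
-/

/-- One application of `ψ` improves the scaled bound `k y ≤ 1` to `(k + 1) y ≤ 1`. -/
theorem scaled_step {k y : ℝ} (hy : 0 ≤ y) (h : k * y ≤ 1) (hk : 0 ≤ k) :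
    (k + 1) * (y - y ^ 2) ≤ 1 := by
  rcases le_total y 1 with h1 | h1
  · nlinarith [mul_le_mul_of_nonneg_right h (sub_nonneg.2 h1), sq_nonneg y]
  · have : y - y ^ 2 ≤ 0 := by nlinarith
    nlinarith

/-- The decay bound without division, which also makes sense for `k = 0`. -/
theorem scaled_decay
    (a : ℝ) (ha : 0 < a) (jn : ℕ → ℤ)
    (hjn : ∀ n, jn (n + 1) = jn n ∨ jn (n + 1) = jn n + 1)
    (D : ℕ → ℤ → ℝ) (hD : ∀ n j, 0 ≤ D n j)
    (hrec : ∀ (n : ℕ) (j : ℤ), jn (n + 1) + 2 ≤ j →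
      D (n + 1) j ≤
        max (max (D n (j - 1)) (D n j)) (D n (j + 1))
          - a * (max (max (D n (j - 1)) (D n j)) (D n (j + 1))) ^ 2)
    (k : ℕ) : ∀ (n : ℕ) (j : ℤ), k ≤ n → (k : ℤ) ≤ j - (jn n + 1) →
      (k : ℝ) * (a * D n j) ≤ 1 := by
  induction k with
  | zero => intro n j _ _; simp
  | succ k ih =>
    intro n j hn hj
    obtain ⟨m, rfl⟩ : ∃ m, n = m + 1 := ⟨n - 1, by omega⟩
    push_cast at hj ⊢
    have hm := hjn m
    have h1 := hrec m j (by omega)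
    have b1 := ih m (j - 1) (by omega) (by omega)
    have b2 := ih m j (by omega) (by omega)
    have b3 := ih m (j + 1) (by omega) (by omega)
    have hM0 : 0 ≤ max (max (D m (j - 1)) (D m j)) (D m (j + 1)) :=
      le_max_of_le_right (hD _ _)
    have hM : (k : ℝ) * (a * max (max (D m (j - 1)) (D m j)) (D m (j + 1))) ≤ 1 := by
      rcases max_choice (max (D m (j - 1)) (D m j)) (D m (j + 1)) with h | h <;> rw [h]
      · rcases max_choice (D m (j - 1)) (D m j) with h | h <;> rw [h] <;> assumption
      · assumption
    generalize max (max (D m (j - 1)) (D m j)) (D m (j + 1)) = M at *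
    have h2 := scaled_step (mul_nonneg ha.le hM0) hM k.cast_nonneg
    refine le_trans (mul_le_mul_of_nonneg_left ?_ (by positivity)) h2
    calc a * D (m + 1) j ≤ a * (M - a * M ^ 2) := mul_le_mul_of_nonneg_left h1 ha.le
      _ = a * M - (a * M) ^ 2 := by ring

/-- decay of the one-sided Lipschitz quantity away from the
interface: if `D(n+1,j) ≤ ψ(max{D(n,j-1), D(n,j), D(n,j+1)})` with
`ψ(x) = x - a x²` holds in every cell at least two cells to the right of the
interface index `jn (n+1)`, then `D(n+1,j) ≤ 1/(k a)` whenever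
`min{n+1, j - (jn (n+1) + 1)} ≥ k ≥ 1`. -/
theorem osl_decay_away_from_interface
    (a : ℝ) (ha : 0 < a) (jn : ℕ → ℤ)
    (hjn : ∀ n, jn (n + 1) = jn n ∨ jn (n + 1) = jn n + 1)
    (D : ℕ → ℤ → ℝ) (hD : ∀ n j, 0 ≤ D n j)
    (hrec : ∀ (n : ℕ) (j : ℤ), jn (n + 1) + 2 ≤ j →
      D (n + 1) j ≤
        max (max (D n (j - 1)) (D n j)) (D n (j + 1))
          - a * (max (max (D n (j - 1)) (D n j)) (D n (j + 1))) ^ 2) :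
    ∀ k : ℤ, 1 ≤ k → ∀ (n : ℕ) (j : ℤ),
      k ≤ min ((n : ℤ) + 1) (j - (jn (n + 1) + 1)) →
      D (n + 1) j ≤ 1 / ((k : ℝ) * a) := by
  intro k hk n j h
  lift k to ℕ using by omega
  have hk' : (0 : ℝ) < k := by exact_mod_cast hk
  have h1 := scaled_decay a ha jn hjn D hD hrec k (n + 1) j (by omega) (by omega)
  push_cast
  rw [le_div_iff₀ (by positivity)]
  linarith
end

section
/- (Discrete localized BV estimate.) Let a > 0, m ∈ ℤ, N ∈ ℕ, and let u : ℤ → ℝ with u_j ∈ [0,1] for all j. Assume that for every j ∈ ℤ with j ≥ m + 2: max{u_{j−1} − u_j, 0} ≤ 1/(a · min{N + 1, j − (m + 1)}). Then for all integers k, J with k ≥ m + 2, J ≥ k and N + 1 ≥ k − (m + 1): Σ_{j=k+1}^{J} |u_j − u_{j−1}| ≤ 1 + (2/a)·(J − k)/(k − (m + 1)). -/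
/-! Since `|x| = x + 2 * max (-x) 0`, the total variation over `[k+1, J]` telescopes to
`u J - u k` plus twice the sum of the one-sided differences `max (u (j-1) - u j) 0`.
For `j > k`, both entries of the minimum in the decay hypothesis are at least `k - (m+1)`, so each
one-sided difference is at most `1 / (a * (k - (m+1)))`; and `u J - u k ≤ 1` as `u` lies in `[0,1]`. -/

open Set

/-- discrete localized BV estimate: if the one-sided differences
of `u` decay like `1/(a·min{N+1, j-(m+1)})` to the right of the interface cell
`m`, then the total variation of `u` over `[k+1, J]` is bounded by
`1 + (2/a)(J-k)/(k-(m+1))`. -/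
theorem discrete_localized_BV_estimate
    (a : ℝ) (ha : 0 < a) (m : ℤ) (N : ℕ) (u : ℤ → ℝ)
    (hu : ∀ j, u j ∈ Icc (0:ℝ) 1)
    (hdecay : ∀ j : ℤ, m + 2 ≤ j →
      max (u (j - 1) - u j) 0 ≤
        1 / (a * min ((N : ℝ) + 1) ((j : ℝ) - ((m : ℝ) + 1)))) :
    ∀ k J : ℤ, m + 2 ≤ k → k ≤ J → k - (m + 1) ≤ (N : ℤ) + 1 →
      (∑ j ∈ Finset.Icc (k + 1) J, |u j - u (j - 1)|) ≤
        1 + 2 / a * (((J : ℝ) - (k : ℝ)) / ((k : ℝ) - ((m : ℝ) + 1))) := by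
  intro k J hk hkJ hkN
  have hkR : (m : ℝ) + 2 ≤ k := by exact_mod_cast hk
  have hkNR : (k : ℝ) - (m + 1) ≤ N + 1 := by exact_mod_cast hkN
  have hd : (0 : ℝ) < k - (m + 1) := by linarith
  have hD : ∀ j : ℤ, k ≤ j →
      max (u (j - 1) - u j) 0 ≤ 1 / (a * ((k : ℝ) - (m + 1))) := by
    intro j hj
    have hjR : (k : ℝ) ≤ j := by exact_mod_cast hj
    refine (hdecay j (hk.trans hj)).trans ?_
    apply one_div_le_one_div_of_le (mul_pos ha hd)
    exact mul_le_mul_of_nonneg_left (le_min hkNR (by linarith)) ha.le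
  -- Keeping the telescoped term `u J - u k` makes the bound inductive in `J`.
  have key : (∑ j ∈ Finset.Icc (k + 1) J, |u j - u (j - 1)|) ≤
      u J - u k + 2 / a * (((J : ℝ) - k) / ((k : ℝ) - (m + 1))) := by
    induction J, hkJ using Int.leInduction with
    | base => simp
    | succ J hJ ih =>
      have hI : Finset.Icc (k + 1) (J + 1) = insert (J + 1) (Finset.Icc (k + 1) J) := by
        ext x
        simp only [Finset.mem_Icc, Finset.mem_insert]
        omega
      rw [hI, Finset.sum_insert (by simp)]
      have h := hD (J + 1) (by omega)
      rw [add_sub_cancel_right] at h ⊢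
      have habs : |u (J + 1) - u J| = u (J + 1) - u J + 2 * max (u J - u (J + 1)) 0 := by
        rcases le_total (u J) (u (J + 1)) with hle | hle
        · rw [abs_of_nonneg (by linarith), max_eq_right (by linarith)]; ring
        · rw [abs_of_nonpos (by linarith), max_eq_left (by linarith)]; ring
      have hsplit : 2 / a * ((((J + 1 : ℤ) : ℝ) - k) / ((k : ℝ) - (m + 1))) =
          2 / a * (((J : ℝ) - k) / ((k : ℝ) - (m + 1))) +
            2 * (1 / (a * ((k : ℝ) - (m + 1)))) := by
        push_cast
        field_simp
        ring
      linarith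
  linarith [(hu J).2, (hu k).1]
end
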